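/- arXiv:1111.6138 — 4 statements merged into one kernel-verified Lean document; each statement's English description precedes it below -/
import Mathlib

section
/- For every integer n ≥ 1 and every integer l with 0 ≤ l ≤ ⌊n/2⌋, the coefficient of X^{n-2l} in the n-th Chebyshev polynomial of the first kind T_n (over ℝ) equals (-1)^l · (n / (2(n-l))) · C(n-l, l) · 2^{n-2l}. -/
open Polynomial

lemma chebU_rec (n : ℕ) : Polynomial.Chebyshev.U ℝ ((n + 2 : ℕ) : ℤ)
    = 2 * (X * Polynomial.Chebyshev.U ℝ ((n + 1 : ℕ) : ℤ)) - Polynomial.Chebyshev.U ℝ (n : ℤ) := by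
  have h := Polynomial.Chebyshev.U_add_two ℝ (n : ℤ)
  push_cast
  rw [h, mul_assoc]

lemma coeff_two_mul' (p : ℝ[X]) (k : ℕ) : (2 * p).coeff k = 2 * p.coeff k := by
  rw [two_mul, coeff_add, two_mul]

lemma chebU_coeff_rec (n k : ℕ) : (Polynomial.Chebyshev.U ℝ ((n + 2 : ℕ) : ℤ)).coeff (k + 1)
    = 2 * (Polynomial.Chebyshev.U ℝ ((n + 1 : ℕ) : ℤ)).coeff k
      - (Polynomial.Chebyshev.U ℝ (n : ℤ)).coeff (k + 1) := by
  rw [chebU_rec, coeff_sub, coeff_two_mul', coeff_X_mul]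

lemma chebU_coeff_rec_zero (n : ℕ) : (Polynomial.Chebyshev.U ℝ ((n + 2 : ℕ) : ℤ)).coeff 0
    = - (Polynomial.Chebyshev.U ℝ (n : ℤ)).coeff 0 := by
  rw [chebU_rec, coeff_sub, coeff_two_mul', coeff_X_mul_zero]
  ring

lemma chebU_one' : Polynomial.Chebyshev.U ℝ ((1 : ℕ) : ℤ) = 2 * X := by
  simp

lemma chebU_vanish (n : ℕ) : ∀ k, n < k → (Polynomial.Chebyshev.U ℝ (n : ℤ)).coeff k = 0 := by
  induction n using Nat.strong_induction_on with
  | _ n ih =>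
    intro k hk
    obtain ⟨k, rfl⟩ : ∃ j, k = j + 1 := ⟨k - 1, by omega⟩
    match n, ih, hk with
    | 0, _, _ => simp [coeff_one]
    | 1, _, hk =>
      rw [chebU_one', coeff_two_mul', coeff_X, if_neg (by omega), mul_zero]
    | n + 2, ih, hk =>
      rw [chebU_coeff_rec, ih (n + 1) (by omega) k (by omega), ih n (by omega) _ (by omega)]
      simp

lemma chebU_coeff (l : ℕ) : ∀ k : ℕ, (Polynomial.Chebyshev.U ℝ ((k + 2 * l : ℕ) : ℤ)).coeff k
    = (-1 : ℝ) ^ l * ((k + l).choose l) * 2 ^ k := by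
  induction l with
  | zero =>
    intro k
    induction k with
    | zero => simp
    | succ k ih =>
      match k, ih with
      | 0, _ =>
        have := chebU_one'
        simp only [zero_add, mul_zero, add_zero]
        rw [this, coeff_two_mul', coeff_X_one]; simp
      | k + 1, ih =>
        have h := chebU_coeff_rec k (k + 1)
        rw [chebU_vanish k _ (by omega)] at h
        simp only [mul_zero, add_zero] at ih ⊢
        rw [show k + 1 + 1 = k + 2 from rfl] at *
        rw [h, ih]; simp; ring
  | succ l ihl =>
    intro k
    induction k with
    | zero =>
      have h := chebU_coeff_rec_zero (0 + 2 * l)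
      rw [ihl 0] at h
      rw [show 0 + 2 * (l + 1) = 0 + 2 * l + 2 by ring, h]
      simp; ring
    | succ k ih =>
      have h := chebU_coeff_rec (k + 1 + 2 * l) k
      rw [ihl (k + 1), show k + 1 + 2 * l + 1 = k + 2 * (l + 1) by ring, ih] at h
      rw [show k + 1 + 2 * (l + 1) = k + 1 + 2 * l + 2 by ring, h,
        show k + 1 + (l + 1) = (k + l + 1) + 1 by ring, Nat.choose_succ_succ,
        show k + (l + 1) = k + l + 1 by ring, show k + 1 + l = k + l + 1 by ring]
      push_cast
      simp only [Nat.succ_eq_add_one]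
      ring

theorem chebyshevT_coeff (n : ℕ) (hn : 1 ≤ n) (l : ℕ) (hl : l ≤ n / 2) :
    (Polynomial.Chebyshev.T ℝ n).coeff (n - 2 * l)
      = (-1 : ℝ) ^ l * ((n : ℝ) / (2 * ((n : ℝ) - l))) * ((n - l).choose l) *
          2 ^ (n - 2 * l) := by
  obtain ⟨k, rfl⟩ : ∃ k, n = k + 2 * l := ⟨n - 2 * l, by omega⟩
  rw [show k + 2 * l - 2 * l = k by omega, show k + 2 * l - l = k + l by omega,
    Polynomial.Chebyshev.T_eq_U_sub_X_mul_U, coeff_sub, chebU_coeff]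
  have hpos : (0 : ℝ) < (k : ℝ) + l := by
    have : 0 < k + l := by omega
    exact_mod_cast this
  have hd : ((k + 2 * l : ℕ) : ℝ) - l = k + l := by push_cast; ring
  rw [hd]
  cases k with
  | zero =>
    rw [coeff_X_mul_zero]
    have : (l : ℝ) ≠ 0 := by simpa using hpos.ne'
    have h2 : (2 * (l : ℝ)) / (2 * l) = 1 := div_self (by positivity)
    simp [h2]
  | succ k =>
    have h1 : ((k + 1 + 2 * l : ℕ) : ℤ) - 1 = ((k + 2 * l : ℕ) : ℤ) := by push_cast; ring
    rw [coeff_X_mul, h1, chebU_coeff]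
    have h2 := Nat.choose_mul_succ_eq (k + l) l
    rw [show k + l + 1 - l = k + 1 by omega] at h2
    rw [show k + 1 + l = k + l + 1 by ring]
    have h3 : ((k + l).choose l : ℝ) * (k + l + 1) = ((k + l + 1).choose l : ℝ) * (k + 1) := by
      exact_mod_cast h2
    push_cast at hpos ⊢
    have hne : (k : ℝ) + 1 + l ≠ 0 := hpos.ne'
    field_simp
    rw [pow_succ]
    linear_combination (-(2 : ℝ) ^ k * 2) * h3
end

section
/- For every integer n ≥ 1, Σ_{l=0}^{⌊n/2⌋} (-1)^l · (n / (2(n-l))) · C(n-l, l) · 2^{n-2l} = 1. -/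
open Finset

def auxT (n l : ℕ) : ℝ := (-1 : ℝ) ^ l * ((n - l).choose l) * 2 ^ (n - 2 * l)

def auxS (n : ℕ) : ℝ := ∑ l ∈ Finset.range (n + 1), auxT n l

lemma auxS_split (n : ℕ) :
    auxS (n + 2) = ∑ j ∈ Finset.range (n + 1), auxT (n + 2) (j + 1) + 2 ^ (n + 2) := by
  unfold auxS
  rw [Finset.sum_range_succ', Finset.sum_range_succ]
  simp [auxT]

lemma auxT_rec (n j : ℕ) (hj : j ≤ n) :
    auxT (n + 2) (j + 1) = 2 * auxT (n + 1) (j + 1) - auxT n j := by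
  unfold auxT
  have h1 : n + 2 - (j + 1) = (n - j) + 1 := by omega
  have h2 : n + 1 - (j + 1) = n - j := by omega
  have h3 : n + 2 - 2 * (j + 1) = n - 2 * j := by omega
  rw [h1, h2, h3, Nat.choose_succ_succ]
  by_cases h : 2 * j + 1 ≤ n
  · have h4 : n - 2 * j = (n + 1 - 2 * (j + 1)) + 1 := by omega
    rw [h4]
    push_cast
    ring
  · have h5 : (n - j).choose (j + 1) = 0 := Nat.choose_eq_zero_of_lt (by omega)
    rw [Nat.succ_eq_add_one, h5]
    push_cast
    ring

lemma auxS_rec (n : ℕ) : auxS (n + 2) = 2 * auxS (n + 1) - auxS n := by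
  rw [auxS_split, Finset.sum_congr rfl (fun j hj => auxT_rec n j
    (by have := Finset.mem_range.1 hj; omega)), Finset.sum_sub_distrib, ← Finset.mul_sum]
  have : auxS (n + 1) = ∑ j ∈ Finset.range (n + 1), auxT (n + 1) (j + 1) + 2 ^ (n + 1) := by
    unfold auxS
    rw [Finset.sum_range_succ']
    simp [auxT]
  rw [this]
  unfold auxS
  ring

lemma auxS_eq (n : ℕ) : auxS n = n + 1 ∧ auxS (n + 1) = n + 2 := by
  induction n with
  | zero => constructor <;> norm_num [auxS, auxT, Finset.sum_range_succ]
  | succ k ih =>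
    refine ⟨by rw [ih.2]; push_cast; ring, ?_⟩
    rw [auxS_rec, ih.1, ih.2]
    push_cast
    ring

lemma aux_term (m j : ℕ) (hj : j ≤ m) :
    (-1 : ℝ) ^ (j + 1) * (((m + 2 : ℕ) : ℝ) / (2 * (((m + 2 : ℕ) : ℝ) - ((j + 1 : ℕ) : ℝ)))) *
      ((m + 2 - (j + 1)).choose (j + 1)) * 2 ^ (m + 2 - 2 * (j + 1))
      = (auxT (m + 2) (j + 1) - auxT m j) / 2 := by
  unfold auxT
  obtain ⟨d, rfl⟩ := Nat.exists_eq_add_of_le hj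
  have h1 : j + d + 2 - (j + 1) = d + 1 := by omega
  have h2 : j + d - j = d := by omega
  have h3 : j + d + 2 - 2 * (j + 1) = j + d - 2 * j := by omega
  rw [h1, h2, h3]
  have h : ((d : ℝ) + 1) * (d.choose j) = ((d + 1).choose (j + 1)) * ((j : ℝ) + 1) := by
    exact_mod_cast Nat.add_one_mul_choose_eq d j
  have hd : (d : ℝ) + 1 ≠ 0 := by positivity
  have h4 : (d.choose j : ℝ) = ((d + 1).choose (j + 1)) * ((j : ℝ) + 1) / (d + 1) := by
    rw [eq_div_iff hd, ← h]; ring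
  rw [h4]
  have h5 : ((j + d + 2 : ℕ) : ℝ) - ((j + 1 : ℕ) : ℝ) = d + 1 := by push_cast; ring
  rw [h5]
  push_cast
  field_simp
  ring

theorem f_n_one_eq_one (n : ℕ) (hn : 1 ≤ n) :
    ∑ l ∈ Finset.range (n / 2 + 1),
      (-1 : ℝ) ^ l * ((n : ℝ) / (2 * ((n : ℝ) - l))) * ((n - l).choose l) *
        2 ^ (n - 2 * l)
      = 1 := by
  obtain rfl | ⟨m, rfl⟩ : n = 1 ∨ ∃ m, n = m + 2 := by
    rcases Nat.lt_or_ge n 2 with h | h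
    · left; omega
    · right; exact ⟨n - 2, by omega⟩
  · norm_num
  · rw [Finset.sum_subset (s₂ := Finset.range (m + 1 + 1))
      (Finset.range_subset_range.2 (by omega))]
    · rw [Finset.sum_range_succ', Finset.sum_congr rfl (fun j hj => aux_term m j
        (by have := Finset.mem_range.1 hj; omega)), ← Finset.sum_div, Finset.sum_sub_distrib]
      have h1 := auxS_split m
      have h2 := (auxS_eq m).1
      have h3 := (auxS_eq (m + 1)).2
      have h4 : ∑ j ∈ Finset.range (m + 1), auxT m j = auxS m := rfl
      have h5 : ∑ j ∈ Finset.range (m + 1), auxT (m + 2) (j + 1)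
          = auxS (m + 2) - 2 ^ (m + 2) := by rw [h1]; ring
      rw [h4, h5, h2, h3]
      have : (m : ℝ) + 2 ≠ 0 := by positivity
      simp only [Nat.cast_zero, Nat.sub_zero, Nat.choose_zero_right, mul_zero, sub_zero]
      push_cast
      field_simp
      ring
    · intro l _ hl
      have : (m + 2 - l).choose l = 0 := Nat.choose_eq_zero_of_lt (by
        rw [Finset.mem_range] at hl; omega)
      simp [this]
end

section
/- For every integer n ≥ 1, (1/2) · Σ_{l=0}^{⌊n/2⌋} (-1)^l · C(n-l-1, l) · 2^{n-2l} = n. -/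
open Finset

lemma antidiag_aux (m : ℕ) :
    ∑ p ∈ antidiagonal m, ((p.1.choose p.2 : ℕ) : ℝ) * 2 ^ p.1 * (-1 / 2) ^ p.2 = m + 1 := by
  induction m using Nat.twoStepInduction with
  | zero => simp
  | one => norm_num [Finset.Nat.antidiagonal_succ]
  | more m h0 h1 =>
    rw [Finset.Nat.sum_antidiagonal_succ'] at h1
    rw [Finset.Nat.sum_antidiagonal_succ', Finset.Nat.sum_antidiagonal_succ]
    have key : ∑ p ∈ antidiagonal m,
        (((p.1 + 1).choose (p.2 + 1) : ℕ) : ℝ) * 2 ^ (p.1 + 1) * (-1 / 2) ^ (p.2 + 1)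
        = - ∑ p ∈ antidiagonal m, ((p.1.choose p.2 : ℕ) : ℝ) * 2 ^ p.1 * (-1 / 2) ^ p.2
          + 2 * ∑ p ∈ antidiagonal m,
            ((p.1.choose (p.2 + 1) : ℕ) : ℝ) * 2 ^ p.1 * (-1 / 2) ^ (p.2 + 1) := by
      rw [← Finset.sum_neg_distrib, Finset.mul_sum, ← Finset.sum_add_distrib]
      refine Finset.sum_congr rfl fun p _ => ?_
      rw [Nat.choose_succ_succ]
      push_cast
      ring
    simp only [key, h0]
    simp at h1 ⊢
    rw [pow_succ (2 : ℝ) (m + 1)]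
    linarith

theorem g_n_one_eq_n (n : ℕ) (hn : 1 ≤ n) :
    (1 / 2 : ℝ) * ∑ l ∈ Finset.range (n / 2 + 1),
      (-1 : ℝ) ^ l * ((n - l - 1).choose l) * 2 ^ (n - 2 * l)
      = n := by
  obtain ⟨m, rfl⟩ : ∃ m, n = m + 1 := ⟨n - 1, by omega⟩
  have h := antidiag_aux m
  rw [← Finset.Nat.sum_antidiagonal_swap, Finset.Nat.sum_antidiagonal_eq_sum_range_succ_mk] at h
  push_cast
  rw [← h, Finset.mul_sum]
  have hsub : Finset.range ((m + 1) / 2 + 1) ⊆ Finset.range m.succ := by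
    intro x hx
    simp only [Finset.mem_range] at hx ⊢
    omega
  rw [← Finset.sum_subset hsub]
  · refine Finset.sum_congr rfl fun l hl => ?_
    simp only [Finset.mem_range] at hl
    simp only [Prod.swap]
    have e : m + 1 - l - 1 = m - l := by omega
    rw [e]
    have e2 : (2 : ℝ) ^ (m - l) * 2 = 2 ^ (m + 1 - 2 * l) * 2 ^ l := by
      rw [← pow_succ, ← pow_add]
      congr 1
      have : l ≤ m := by omega
      omega
    have e3 : (2 : ℝ) ^ (m - l) = 2 ^ (m + 1 - 2 * l) * 2 ^ l / 2 := by linarith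
    rw [e3, div_pow]
    field_simp
  · intro l _ hl
    simp only [Finset.mem_range] at hl
    simp only [Prod.swap]
    rw [Nat.choose_eq_zero_of_lt (by omega)]
    simp
end

section
/- Let h, a₁, a₂, b₁, b₂, c₁, c₂, d, e, f ∈ ℝ with h ≠ 0, c₁ > 0, c₂ = c₁, f = c₁, e = 2c₁, b₂ = b₁, d = -b₁, a₂ = a₁, and a₁ + 2/h² = b₁/√(h²c₁). If φ, ψ : ℤ → ℝ satisfy φ_n² + ψ_n² = 1/√(c₁h²) for all n ∈ ℤ, then φ and ψ solve the coupled discrete φ⁶ model: for all n ∈ ℤ, (1/h²)(φ_{n+1} + φ_{n-1} - 2φ_n) = a₁φ_n - b₁φ_n³ + dψ_n²φ_n + [c₁φ_n⁴ + eφ_n²ψ_n² + fψ_n⁴]·(φ_{n+1} + φ_{n-1}) and (1/h²)(ψ_{n+1} + ψ_{n-1} - 2ψ_n) = a₂ψ_n - b₂ψ_n³ + dφ_n²ψ_n + [c₂ψ_n⁴ + (e/2)φ_n⁴ + 2fφ_n²ψ_n²]·(ψ_{n+1} + ψ_{n-1}). -/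
theorem coupled_discrete_phi6_solution
    (h a₁ a₂ b₁ b₂ c₁ c₂ d e f : ℝ) (hh : h ≠ 0) (hc₁ : 0 < c₁)
    (hc₂ : c₂ = c₁) (hf : f = c₁) (he : e = 2 * c₁)
    (hb₂ : b₂ = b₁) (hd : d = -b₁) (ha₂ : a₂ = a₁)
    (ha₁ : a₁ + 2 / h ^ 2 = b₁ / Real.sqrt (h ^ 2 * c₁))
    (φ ψ : ℤ → ℝ)
    (hconstr : ∀ n : ℤ, φ n ^ 2 + ψ n ^ 2 = 1 / Real.sqrt (c₁ * h ^ 2)) :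
    ∀ n : ℤ,
      (1 / h ^ 2) * (φ (n + 1) + φ (n - 1) - 2 * φ n)
        = a₁ * φ n - b₁ * φ n ^ 3 + d * ψ n ^ 2 * φ n
          + (c₁ * φ n ^ 4 + e * φ n ^ 2 * ψ n ^ 2 + f * ψ n ^ 4)
            * (φ (n + 1) + φ (n - 1)) ∧
      (1 / h ^ 2) * (ψ (n + 1) + ψ (n - 1) - 2 * ψ n)
        = a₂ * ψ n - b₂ * ψ n ^ 3 + d * φ n ^ 2 * ψ n
          + (c₂ * ψ n ^ 4 + (e / 2) * φ n ^ 4 + 2 * f * φ n ^ 2 * ψ n ^ 2)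
            * (ψ (n + 1) + ψ (n - 1)) := by
  intro n
  have hS := hconstr n
  have hA : a₁ + 2 * (1 / h ^ 2) = b₁ * (φ n ^ 2 + ψ n ^ 2) := by
    rw [hS, mul_comm c₁, mul_one_div, mul_one_div]
    exact ha₁
  have hC : c₁ * (φ n ^ 2 + ψ n ^ 2) ^ 2 = 1 / h ^ 2 := by
    rw [hS, div_pow, Real.sq_sqrt (by positivity)]
    field_simp
  subst hc₂ hf he hb₂ hd ha₂
  constructor
  · linear_combination (-φ n) * hA - (φ (n + 1) + φ (n - 1)) * hC
  · linear_combination (-ψ n) * hA - (ψ (n + 1) + ψ (n - 1)) * hC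
end
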